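/- Let I = (x(y^3−z^3), y(x^3−z^3), z(x^3−y^3)) ⊆ C[x,y,z] and let ψ: C[x,y,z] → C[x,y,z] be given by x ↦ x^2, y ↦ y^2, z ↦ z^2. Then the (non-radical) ideal ψ_*(I) = (x^2(y^6−z^6), y^2(x^6−z^6), z^2(x^6−y^6)) satisfies ψ_*(I)^{(3)} ⊄ ψ_*(I)^2. -/

import Mathlib

open MvPolynomial

/-- The `m`-th symbolic power `I^(m) = ⋂_{P ∈ Ass(R/I)} (I^m R_P ∩ R)`. -/
noncomputable def symbolicPower {R : Type*} [CommRing R] (I : Ideal R) (m : ℕ) : Ideal R :=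
  ⨅ (P : Ideal R) (hP : P ∈ associatedPrimes R (R ⧸ I)),
    letI : P.IsPrime := hP.1
    Ideal.comap (algebraMap R (Localization.AtPrime P))
      (Ideal.map (algebraMap R (Localization.AtPrime P)) (I ^ m))

/-! Write `A = a ^ m`, `B = b ^ m`, `C = c ^ m`, let `J` be generated by `a (B - C)`, `b (A - C)`,
`c (A - B)`, and let `F = (A - B) (B - C) (C - A)` be the product of the lines of the configuration.
For a sequence `a, b, c` that is regular in every order, `J` is the intersection of
`(A - C, B - C)`, `(a, b)`, `(b, c)` and `(c, a)`, so no associated prime of `J` contains all of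
`a, b, c`. As `a ^ (m + 1) * F`, `b ^ (m + 1) * F` and `c ^ (m + 1) * F` lie in `J ^ 3`, this puts
`F` in the third symbolic power.

If `F` were in `J ^ 2`, then `F = p * (a (B - C)) ^ 2` modulo `(b (A - C), c (A - B)) J`, which is
contained in both `(a ^ (m + 1), c)` and `(a ^ (m + 1), b)`. Comparing coefficients gives
`p = a ^ (m - 2)` modulo `(a ^ (m - 1), c)` and `p = -a ^ (m - 2)` modulo `(a ^ (m - 1), b)`, whence
`2` would lie in `(a, b, c)`. -/

open RingTheory.Sequence

section SymbolicPower

variable {R : Type*} [CommRing R] {I : Ideal R}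

theorem mem_symbolicPower_iff {n : ℕ} {f : R} :
    f ∈ symbolicPower I n ↔ ∀ P ∈ associatedPrimes R (R ⧸ I), ∃ s ∉ P, s * f ∈ I ^ n := by
  simp only [symbolicPower, Ideal.mem_iInf, Ideal.mem_comap]
  refine forall₂_congr fun P hP ↦ ?_
  have : P.IsPrime := hP.1
  simp [IsLocalization.algebraMap_mem_map_algebraMap_iff P.primeCompl, Ideal.mem_primeCompl_iff]

theorem exists_notMem_forall_pow_mul_mem_of_mem_associatedPrimes {P : Ideal R}
    (hP : P ∈ associatedPrimes R (R ⧸ I)) : ∃ f ∉ I, ∀ r ∈ P, ∃ n : ℕ, r ^ n * f ∈ I := by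
  obtain ⟨hprime, q, hq⟩ := hP
  obtain ⟨f, rfl⟩ := Ideal.Quotient.mk_surjective q
  have mem_iff (r : R) : r ∈ P ↔ ∃ n : ℕ, r ^ n * f ∈ I := by
    simp only [hq, Ideal.mem_radical_iff, Submodule.mem_colon_singleton, Submodule.mem_bot]
    exact exists_congr fun n ↦ Ideal.Quotient.eq_zero_iff_mem
  exact ⟨f, fun hf ↦ hprime.one_notMem ((mem_iff 1).2 ⟨0, by simpa using hf⟩),
    fun r ↦ (mem_iff r).1⟩

end SymbolicPower

section Regular

variable {R : Type*} [CommRing R] {a b c : R}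

theorem mem_of_isSMulRegular_quotient_of_mul_mem {I : Ideal R} (ha : IsSMulRegular (R ⧸ I) a)
    {r : R} (hr : a * r ∈ I) : r ∈ I :=
  mem_of_isSMulRegular_quotient_of_smul_mem ha hr

theorem isSMulRegular_quotient_span_pow_pair (hb : IsSMulRegular (R ⧸ Ideal.span {c}) b)
    (ha : IsSMulRegular (R ⧸ Ideal.span {b, c}) a) (n : ℕ) :
    IsSMulRegular (R ⧸ Ideal.span {b ^ n, c}) a := by
  refine (isSMulRegular_quotient_iff_mem_of_smul_mem _ _).2 fun r hr ↦ ?_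
  induction n generalizing r with
  | zero => simp [Ideal.span_insert]
  | succ n ih =>
    obtain ⟨s, t, hst⟩ := Ideal.mem_span_pair.1 hr
    rw [smul_eq_mul] at hst
    obtain ⟨u, v, rfl⟩ := Ideal.mem_span_pair.1 <|
      mem_of_isSMulRegular_quotient_of_mul_mem (r := r) ha
        (Ideal.mem_span_pair.2 ⟨s * b ^ n, t, by linear_combination hst⟩)
    have hu : a • u ∈ Ideal.span {b ^ n, c} := by
      obtain ⟨w, hw⟩ := Ideal.mem_span_singleton'.1 <|
        mem_of_isSMulRegular_quotient_of_mul_mem (r := a * u - s * b ^ n) hb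
          (Ideal.mem_span_singleton'.2 ⟨t - a * v, by linear_combination hst⟩)
      exact Ideal.mem_span_pair.2 ⟨s, w, by rw [smul_eq_mul]; linear_combination hw⟩
    obtain ⟨p, q, rfl⟩ := Ideal.mem_span_pair.1 (ih u hu)
    exact Ideal.mem_span_pair.2 ⟨p, q * b + v, by ring⟩

theorem isSMulRegular_quotient_span_pow_sub_pow (hc : IsSMulRegular R c)
    (hb : IsSMulRegular (R ⧸ Ideal.span {c}) b) (ha : IsSMulRegular (R ⧸ Ideal.span {b, c}) a)
    {m : ℕ} (hm : m ≠ 0) :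
    IsSMulRegular (R ⧸ Ideal.span {a ^ m - c ^ m, b ^ m - c ^ m}) c := by
  obtain ⟨k, rfl⟩ := Nat.exists_eq_add_one_of_ne_zero hm
  refine (isSMulRegular_quotient_iff_mem_of_smul_mem _ _).2 fun f hf ↦ ?_
  obtain ⟨p, q, hpq⟩ := Ideal.mem_span_pair.1 hf
  rw [smul_eq_mul] at hpq
  have ha' := (isSMulRegular_quotient_span_pow_pair hb ha (k + 1)).pow (k + 1)
  -- Modulo `c`, the pair `(p, q)` is a syzygy of `a ^ m` and `b ^ m`, hence a Koszul syzygy.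
  obtain ⟨r, t, rfl⟩ := Ideal.mem_span_pair.1 <|
    mem_of_isSMulRegular_quotient_of_mul_mem (r := p) ha'
      (Ideal.mem_span_pair.2 ⟨-q, f + (p + q) * c ^ k, by linear_combination -hpq⟩)
  obtain ⟨s, hs⟩ := Ideal.mem_span_singleton'.1 <|
    mem_of_isSMulRegular_quotient_of_mul_mem (r := q + r * a ^ (k + 1)) (hb.pow (k + 1))
      (Ideal.mem_span_singleton'.2
        ⟨f + (r * b ^ (k + 1) + t * c + q) * c ^ k - t * a ^ (k + 1), by linear_combination -hpq⟩)
  have hf : f = (r * c ^ k + t) * (a ^ (k + 1) - c ^ (k + 1)) +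
      (s - r * c ^ k) * (b ^ (k + 1) - c ^ (k + 1)) := by
    refine hc ?_
    simp only [smul_eq_mul]
    linear_combination -hpq - (b ^ (k + 1) - c ^ (k + 1)) * hs
  exact Ideal.mem_span_pair.2 ⟨_, _, hf.symm⟩

end Regular

/-- A sequence all of whose reorderings are weakly regular on `R`. Reordering is built in because,
outside the local and graded settings, it need not preserve weak regularity. -/
def IsPermutablyWeaklyRegular {R : Type*} [CommRing R] (rs : List R) : Prop :=
  ∀ ⦃rs' : List R⦄, rs'.Perm rs → IsWeaklyRegular R rs'

namespace IsPermutablyWeaklyRegular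

variable {R : Type*} [CommRing R] {a b c : R}

theorem of_perm {rs rs' : List R} (h : IsPermutablyWeaklyRegular rs) (hrs : rs'.Perm rs) :
    IsPermutablyWeaklyRegular rs' :=
  fun _ h' ↦ h (h'.trans hrs)

theorem rotate (h : IsPermutablyWeaklyRegular [a, b, c]) : IsPermutablyWeaklyRegular [b, c, a] :=
  h.of_perm (List.perm_append_comm (l₁ := [b, c]) (l₂ := [a]))

theorem swap (h : IsPermutablyWeaklyRegular [a, b, c]) : IsPermutablyWeaklyRegular [a, c, b] :=
  h.of_perm ((List.Perm.swap b c []).cons a)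

theorem isSMulRegular (h : IsPermutablyWeaklyRegular [a, b, c]) : IsSMulRegular R a :=
  ((isWeaklyRegular_cons_iff R a [b, c]).1 (h (List.Perm.refl _))).1

theorem isSMulRegular_quotient_span_singleton (h : IsPermutablyWeaklyRegular [a, b, c]) :
    IsSMulRegular (R ⧸ Ideal.span {a}) b := by
  have hspan : Ideal.ofList [a] • (⊤ : Ideal R) = Ideal.span {a} := by simp
  exact hspan ▸ (h (List.Perm.refl _)).regular_mod_prev 1 (by simp)

theorem isSMulRegular_quotient_span_pair (h : IsPermutablyWeaklyRegular [a, b, c]) :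
    IsSMulRegular (R ⧸ Ideal.span {a, b}) c := by
  have hspan : Ideal.ofList [a, b] • (⊤ : Ideal R) = Ideal.span {a, b} := by
    simp [Ideal.span_insert]
  exact hspan ▸ (h (List.Perm.refl _)).regular_mod_prev 2 (by simp)

end IsPermutablyWeaklyRegular

section MvPolynomial

variable {σ k : Type*} [CommRing k]

theorem isSMulRegular_quotient_span_X_pow {s : Set σ} {i : σ} (hi : i ∉ s) (e : σ → ℕ) :
    IsSMulRegular (MvPolynomial σ k ⧸ Ideal.span ((fun j ↦ (X j : MvPolynomial σ k) ^ e j) '' s))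
      (X i : MvPolynomial σ k) := by
  have himage : ((fun j ↦ X j ^ e j) '' s : Set (MvPolynomial σ k)) =
      (fun u ↦ monomial u 1) '' ((fun j ↦ Finsupp.single j (e j)) '' s) := by
    simp only [Set.image_image, X_pow_eq_monomial]
  rw [himage]
  refine (isSMulRegular_quotient_iff_mem_of_smul_mem _ _).2 fun f hf ↦ ?_
  rw [smul_eq_mul, mem_ideal_span_monomial_image] at hf
  refine mem_ideal_span_monomial_image.2 fun u hu ↦ ?_
  obtain ⟨_, ⟨j, hj, rfl⟩, hle⟩ := hf (Finsupp.single i 1 + u) (by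
    rwa [mem_support_iff, coeff_X_mul, ← mem_support_iff])
  have hij : i ≠ j := fun hij ↦ hi (hij ▸ hj)
  refine ⟨_, ⟨j, hj, rfl⟩, Finsupp.single_le_iff.2 ?_⟩
  simpa [hij] using Finsupp.single_le_iff.1 hle

theorem isWeaklyRegular_map_X_pow {l : List σ} (hl : l.Nodup) (e : σ → ℕ) :
    IsWeaklyRegular (MvPolynomial σ k) (l.map fun i ↦ (X i : MvPolynomial σ k) ^ e i) := by
  refine ⟨fun n hn ↦ ?_⟩
  rw [List.length_map] at hn
  have hspan : Ideal.ofList ((l.map fun i ↦ (X i : MvPolynomial σ k) ^ e i).take n) =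
      Ideal.span ((fun i ↦ (X i : MvPolynomial σ k) ^ e i) '' {i | i ∈ l.take n}) := by
    rw [← List.map_take]
    exact congrArg Ideal.span (Set.ext fun f ↦ List.mem_map)
  have hnot : l[n] ∉ l.take n := by
    intro hmem
    obtain ⟨i, hi, hil⟩ := List.mem_take_iff_getElem.1 hmem
    have := hl.getElem_inj_iff.1 hil
    lia
  rw [List.getElem_map, hspan, smul_eq_mul, Ideal.mul_top]
  exact (isSMulRegular_quotient_span_X_pow (s := {i | i ∈ l.take n}) hnot e).pow _

theorem isPermutablyWeaklyRegular_map_X_pow {l : List σ} (hl : l.Nodup) (e : σ → ℕ) :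
    IsPermutablyWeaklyRegular (l.map fun i ↦ (X i : MvPolynomial σ k) ^ e i) := by
  intro rs hrs
  obtain ⟨l', rfl, hl'⟩ := (congrFun₂ (List.eq_map_comp_perm _) rs l).mpr hrs
  exact isWeaklyRegular_map_X_pow (hl'.nodup_iff.2 hl) e

theorem notMem_ofList_map_X_pow_of_constantCoeff_ne_zero {f : MvPolynomial σ k}
    (hf : constantCoeff f ≠ 0) {l : List σ} {e : σ → ℕ} (he : ∀ i ∈ l, e i ≠ 0) :
    f ∉ Ideal.ofList (l.map fun i ↦ (X i : MvPolynomial σ k) ^ e i) := by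
  have hle : Ideal.ofList (l.map fun i ↦ (X i : MvPolynomial σ k) ^ e i) ≤
      RingHom.ker (constantCoeff : MvPolynomial σ k →+* k) := by
    refine Ideal.span_le.2 fun g hg ↦ ?_
    obtain ⟨i, hi, rfl⟩ := List.mem_map.1 hg
    simp [he i hi]
  exact fun hmem ↦ hf (hle hmem)

end MvPolynomial

theorem sq_span_singleton_sup {R : Type*} [CommRing R] (g : R) (K : Ideal R) :
    (Ideal.span {g} ⊔ K) ^ 2 = Ideal.span {g ^ 2} ⊔ K * (Ideal.span {g} ⊔ K) := by
  rw [← Ideal.span_singleton_pow]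
  simp only [← Ideal.add_eq_sup]
  have hidem : Ideal.span {g} * K + Ideal.span {g} * K = Ideal.span {g} * K := sup_idem _
  calc (Ideal.span {g} + K) ^ 2
      = Ideal.span {g} ^ 2 + (Ideal.span {g} * K + Ideal.span {g} * K) + K ^ 2 := by ring
    _ = Ideal.span {g} ^ 2 + K * (Ideal.span {g} + K) := by rw [hidem]; ring

section FermatIdeal

variable {R : Type*} [CommRing R]

/-- The ideal of the Fermat configuration of exponent `m`, evaluated at `a`, `b`, `c`. For `m = 3`
and the coordinates of `ℙ²` it is the ideal of the dual Hesse configuration. -/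
def fermatIdeal (a b c : R) (m : ℕ) : Ideal R :=
  Ideal.span {a * (b ^ m - c ^ m), b * (a ^ m - c ^ m), c * (a ^ m - b ^ m)}

/-- The product of the `3 * m` lines of the Fermat configuration, evaluated at `a`, `b`, `c`; it
witnesses the failure of containment. -/
def fermatProduct (a b c : R) (m : ℕ) : R :=
  (a ^ m - b ^ m) * (b ^ m - c ^ m) * (c ^ m - a ^ m)

variable {a b c : R} {m : ℕ}

theorem mem_fermatIdeal {f : R} :
    f ∈ fermatIdeal a b c m ↔ ∃ p q r, p * (a * (b ^ m - c ^ m)) + q * (b * (a ^ m - c ^ m)) +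
      r * (c * (a ^ m - b ^ m)) = f :=
  Submodule.mem_span_triple

theorem fermatIdeal_swap : fermatIdeal a c b m = fermatIdeal a b c m := by
  ext f
  simp only [mem_fermatIdeal]
  constructor <;> rintro ⟨p, q, r, rfl⟩ <;> exact ⟨-p, r, q, by ring⟩

theorem fermatIdeal_rotate : fermatIdeal b c a m = fermatIdeal a b c m := by
  ext f
  simp only [mem_fermatIdeal]
  constructor
  · rintro ⟨p, q, r, rfl⟩
    exact ⟨r, -p, -q, by ring⟩
  · rintro ⟨p, q, r, rfl⟩
    exact ⟨-q, -r, p, by ring⟩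

theorem fermatProduct_swap : fermatProduct a c b m = -fermatProduct a b c m := by
  unfold fermatProduct
  ring

theorem fermatProduct_rotate : fermatProduct b c a m = fermatProduct a b c m := by
  unfold fermatProduct
  ring

theorem fermatIdeal_le_span_pair (hm : m ≠ 0) : fermatIdeal a b c m ≤ Ideal.span {a, b} := by
  obtain ⟨k, rfl⟩ := Nat.exists_eq_add_one_of_ne_zero hm
  intro f hf
  obtain ⟨p, q, r, rfl⟩ := mem_fermatIdeal.1 hf
  exact Ideal.mem_span_pair.2 ⟨p * (b ^ (k + 1) - c ^ (k + 1)) + r * c * a ^ k,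
    q * (a ^ (k + 1) - c ^ (k + 1)) - r * c * b ^ k, by ring⟩

theorem fermatIdeal_le_span_pow_sub_pow :
    fermatIdeal a b c m ≤ Ideal.span {a ^ m - c ^ m, b ^ m - c ^ m} := by
  intro f hf
  obtain ⟨p, q, r, rfl⟩ := mem_fermatIdeal.1 hf
  exact Ideal.mem_span_pair.2 ⟨q * b + r * c, p * a - r * c, by ring⟩

theorem fermatIdeal_eq_inf (h : IsPermutablyWeaklyRegular [a, b, c]) (hm : m ≠ 0) :
    fermatIdeal a b c m = Ideal.span {a ^ m - c ^ m, b ^ m - c ^ m} ⊓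
      (Ideal.span {a, b} ⊓ (Ideal.span {b, c} ⊓ Ideal.span {c, a})) := by
  refine le_antisymm (le_inf fermatIdeal_le_span_pow_sub_pow <|
    le_inf (fermatIdeal_le_span_pair hm) <| le_inf ?_ ?_) ?_
  · rw [← fermatIdeal_rotate]
    exact fermatIdeal_le_span_pair hm
  · rw [← fermatIdeal_rotate, ← fermatIdeal_rotate]
    exact fermatIdeal_le_span_pair hm
  rintro f ⟨hf, hab, hbc, hca⟩
  obtain ⟨k, rfl⟩ := Nat.exists_eq_add_one_of_ne_zero hm
  obtain ⟨p, q, rfl⟩ := Ideal.mem_span_pair.1 hf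
  obtain ⟨s₁, t₁, h₁⟩ := Ideal.mem_span_pair.1 hab
  obtain ⟨s₂, t₂, h₂⟩ := Ideal.mem_span_pair.1 hbc
  obtain ⟨s₃, t₃, h₃⟩ := Ideal.mem_span_pair.1 hca
  have hc := h.isSMulRegular_quotient_span_pair
  have hpq : p + q ∈ Ideal.span {a, b} :=
    mem_of_isSMulRegular_quotient_of_mul_mem (hc.pow (k + 1)) <|
      Ideal.mem_span_pair.2 ⟨p * a ^ k - s₁, q * b ^ k - t₁, by linear_combination -h₁⟩
  have hp : p ∈ Ideal.span {b, c} :=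
    mem_of_isSMulRegular_quotient_of_mul_mem
      (h.rotate.isSMulRegular_quotient_span_pair.pow (k + 1)) <|
      Ideal.mem_span_pair.2 ⟨s₂ - q * b ^ k, t₂ + (p + q) * c ^ k, by linear_combination h₂⟩
  have hq : q ∈ Ideal.span {c, a} :=
    mem_of_isSMulRegular_quotient_of_mul_mem
      (h.rotate.rotate.isSMulRegular_quotient_span_pair.pow (k + 1)) <|
      Ideal.mem_span_pair.2 ⟨s₃ + (p + q) * c ^ k, t₃ - p * a ^ k, by linear_combination h₃⟩
  obtain ⟨s, t, hst⟩ := Ideal.mem_span_pair.1 hpq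
  obtain ⟨p₁, p₂, rfl⟩ := Ideal.mem_span_pair.1 hp
  obtain ⟨q₂, q₁, rfl⟩ := Ideal.mem_span_pair.1 hq
  obtain ⟨u, v, huv⟩ := Ideal.mem_span_pair.1 <|
    mem_of_isSMulRegular_quotient_of_mul_mem (r := p₂ + q₂) hc <|
      Ideal.mem_span_pair.2 ⟨s - q₁, t - p₁, by linear_combination hst⟩
  exact mem_fermatIdeal.2 ⟨q₁ + u * c, p₁ + v * c, u * a - q₂, by
    linear_combination c * (a ^ (k + 1) - c ^ (k + 1)) * huv⟩

theorem mem_fermatIdeal_of_pow_mul_mem (h : IsPermutablyWeaklyRegular [a, b, c]) (hm : m ≠ 0)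
    {f : R} {i j l : ℕ} (ha : a ^ i * f ∈ fermatIdeal a b c m)
    (hb : b ^ j * f ∈ fermatIdeal a b c m) (hc : c ^ l * f ∈ fermatIdeal a b c m) :
    f ∈ fermatIdeal a b c m := by
  rw [fermatIdeal_eq_inf h hm] at ha hb hc ⊢
  have hreg := isSMulRegular_quotient_span_pow_sub_pow h.rotate.rotate.isSMulRegular
    h.rotate.rotate.swap.isSMulRegular_quotient_span_singleton
    h.rotate.isSMulRegular_quotient_span_pair hm
  exact ⟨mem_of_isSMulRegular_quotient_of_mul_mem (hreg.pow l) hc.1,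
    mem_of_isSMulRegular_quotient_of_mul_mem (h.isSMulRegular_quotient_span_pair.pow l) hc.2.1,
    mem_of_isSMulRegular_quotient_of_mul_mem
      (h.rotate.isSMulRegular_quotient_span_pair.pow i) ha.2.2.1,
    mem_of_isSMulRegular_quotient_of_mul_mem
      (h.rotate.rotate.isSMulRegular_quotient_span_pair.pow j) hb.2.2.2⟩

theorem pow_mul_fermatProduct_mem (hm : 3 ≤ m) :
    a ^ (m + 1) * fermatProduct a b c m ∈ fermatIdeal a b c m ^ 3 := by
  obtain ⟨k, rfl⟩ := Nat.exists_eq_add_of_le' hm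
  set J := fermatIdeal a b c (k + 3)
  set g₁ := a * (b ^ (k + 3) - c ^ (k + 3)) with hg₁
  set g₂ := b * (a ^ (k + 3) - c ^ (k + 3)) with hg₂
  set g₃ := c * (a ^ (k + 3) - b ^ (k + 3)) with hg₃
  have h₁ : g₁ ∈ J := Ideal.subset_span (by simp [g₁])
  have h₂ : g₂ ∈ J := Ideal.subset_span (by simp [g₂])
  have h₃ : g₃ ∈ J := Ideal.subset_span (by simp [g₃])
  have mul_sq_mem {g : R} (hg : g ∈ J) : g₁ * g ^ 2 ∈ J ^ 3 :=
    pow_succ' J 2 ▸ Ideal.mul_mem_mul h₁ (Ideal.pow_mem_pow hg 2)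
  -- Writing `A = a ^ m`, `B = b ^ m`, `C = c ^ m`, the two parts of the right-hand side are
  -- `-a * B * (A - B) * (A - C) ^ 2` and `a * C * (A - B) ^ 2 * (A - C)`.
  have hexpand : a ^ (k + 3 + 1) * fermatProduct a b c (k + 3) =
      -a * b ^ k * g₂ ^ 3 + b ^ (k + 1) * (g₁ * g₂ ^ 2) +
        (a * c ^ k * g₃ ^ 3 + c ^ (k + 1) * (g₁ * g₃ ^ 2)) := by
    simp only [fermatProduct, hg₁, hg₂, hg₃]
    ring
  rw [hexpand]
  exact add_mem
    (add_mem (Ideal.mul_mem_left _ _ (Ideal.pow_mem_pow h₂ 3))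
      (Ideal.mul_mem_left _ _ (mul_sq_mem h₂)))
    (add_mem (Ideal.mul_mem_left _ _ (Ideal.pow_mem_pow h₃ 3))
      (Ideal.mul_mem_left _ _ (mul_sq_mem h₃)))

theorem fermatProduct_mem_symbolicPower (h : IsPermutablyWeaklyRegular [a, b, c]) (hm : 3 ≤ m) :
    fermatProduct a b c m ∈ symbolicPower (fermatIdeal a b c m) 3 := by
  refine mem_symbolicPower_iff.2 fun P hP ↦ ?_
  have : P.IsPrime := hP.1
  by_contra! hF
  have mem_P {r : R} (hr : r ^ (m + 1) * fermatProduct a b c m ∈ fermatIdeal a b c m ^ 3) :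
      r ∈ P := by
    by_contra hrP
    exact hF _ (fun hpow ↦ hrP (Ideal.IsPrime.mem_of_pow_mem this _ hpow)) hr
  have ha : a ∈ P := mem_P (pow_mul_fermatProduct_mem hm)
  have hb : b ∈ P := mem_P (by
    simpa only [fermatIdeal_rotate, fermatProduct_rotate] using
      pow_mul_fermatProduct_mem (a := b) (b := c) (c := a) hm)
  have hc : c ∈ P := mem_P (by
    rw [← fermatIdeal_rotate, ← fermatIdeal_rotate, ← fermatProduct_rotate, ← fermatProduct_rotate]
    exact pow_mul_fermatProduct_mem hm)
  obtain ⟨f, hf, hpow⟩ := exists_notMem_forall_pow_mul_mem_of_mem_associatedPrimes hP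
  obtain ⟨i, hi⟩ := hpow a ha
  obtain ⟨j, hj⟩ := hpow b hb
  obtain ⟨l, hl⟩ := hpow c hc
  exact hf (mem_fermatIdeal_of_pow_mul_mem h (by lia) hi hj hl)

theorem exists_sub_mul_sq_mem_of_mem_sq {f : R} (hf : f ∈ fermatIdeal a b c m ^ 2) :
    ∃ p, f - p * (a * (b ^ m - c ^ m)) ^ 2 ∈
      Ideal.span {b * (a ^ m - c ^ m), c * (a ^ m - b ^ m)} * fermatIdeal a b c m := by
  have hJ : fermatIdeal a b c m = Ideal.span {a * (b ^ m - c ^ m)} ⊔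
      Ideal.span {b * (a ^ m - c ^ m), c * (a ^ m - b ^ m)} := Ideal.span_insert _ _
  rw [hJ, sq_span_singleton_sup, Ideal.mem_span_singleton_sup] at hf
  obtain ⟨p, r, hr, rfl⟩ := hf
  exact ⟨p, by rwa [add_sub_cancel_left, hJ]⟩

theorem span_pair_mul_fermatIdeal_le (hm : m ≠ 0) :
    Ideal.span {b * (a ^ m - c ^ m), c * (a ^ m - b ^ m)} * fermatIdeal a b c m ≤
      Ideal.span {a ^ (m + 1), c} := by
  have hK : Ideal.span {b * (a ^ m - c ^ m), c * (a ^ m - b ^ m)} ≤ Ideal.span {a ^ m, c} := by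
    obtain ⟨k, rfl⟩ := Nat.exists_eq_add_one_of_ne_zero hm
    refine Ideal.span_le.2 (Set.pair_subset ?_ ?_)
    · exact Ideal.mem_span_pair.2 ⟨b, -b * c ^ k, by ring⟩
    · exact Ideal.mem_span_pair.2 ⟨0, a ^ (k + 1) - b ^ (k + 1), by ring⟩
  have hJ : fermatIdeal a b c m ≤ Ideal.span {a, c} :=
    fermatIdeal_swap (a := a) ▸ fermatIdeal_le_span_pair hm
  refine (Ideal.mul_mono hK hJ).trans ?_
  rw [Ideal.span_pair_mul_span_pair, Ideal.span_le]
  rintro _ (rfl | rfl | rfl | rfl)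
  exacts [Ideal.mem_span_pair.2 ⟨1, 0, by ring⟩, Ideal.mem_span_pair.2 ⟨0, a ^ m, by ring⟩,
    Ideal.mem_span_pair.2 ⟨0, a, by ring⟩, Ideal.mem_span_pair.2 ⟨0, c, by ring⟩]

theorem sub_pow_mem_span_of_fermatProduct_sub_mul_sq_mem
    (h : IsPermutablyWeaklyRegular [a, b, c]) {k : ℕ} {p : R}
    (hp : fermatProduct a b c (k + 2) - p * (a * (b ^ (k + 2) - c ^ (k + 2))) ^ 2 ∈
      Ideal.span {a ^ (k + 3), c}) :
    p - a ^ k ∈ Ideal.span {a ^ (k + 1), c} := by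
  have ha := h.rotate.rotate.isSMulRegular_quotient_span_singleton
  have hb := isSMulRegular_quotient_span_pow_pair ha
    h.swap.isSMulRegular_quotient_span_pair (k + 3)
  obtain ⟨s, t, hst⟩ := Ideal.mem_span_pair.1 hp
  simp only [fermatProduct] at hst
  have hmem : a ^ 2 * (p - a ^ k) ∈ Ideal.span {a ^ (k + 3), c} := by
    -- Modulo `a ^ (m + 1)` and `c`, where `m = k + 2`, `fermatProduct` is
    -- `a ^ m * b ^ (2 * m)`.
    refine mem_of_isSMulRegular_quotient_of_mul_mem (hb.pow (2 * (k + 2))) <|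
      Ideal.mem_span_pair.2 ⟨-s - a ^ (k + 1) * b ^ (k + 2),
        -t + c ^ (k + 1) * (a ^ (2 * (k + 2)) - b ^ (2 * (k + 2)) + (b ^ (k + 2) - a ^ (k + 2)) *
          c ^ (k + 2) - p * a ^ 2 * (c ^ (k + 2) - 2 * b ^ (k + 2))), ?_⟩
    linear_combination -hst
  obtain ⟨u, v, huv⟩ := Ideal.mem_span_pair.1 hmem
  obtain ⟨w, hw⟩ := Ideal.mem_span_singleton'.1 <|
    mem_of_isSMulRegular_quotient_of_mul_mem (r := p - a ^ k - u * a ^ (k + 1)) (ha.pow 2) <|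
      Ideal.mem_span_singleton'.2 ⟨v, by linear_combination huv⟩
  exact Ideal.mem_span_pair.2 ⟨u, w, by linear_combination hw⟩

theorem two_mem_span_of_fermatProduct_mem_sq (h : IsPermutablyWeaklyRegular [a, b, c])
    (hm : 2 ≤ m) (hF : fermatProduct a b c m ∈ fermatIdeal a b c m ^ 2) :
    2 ∈ Ideal.ofList [a, b, c] := by
  obtain ⟨k, rfl⟩ := Nat.exists_eq_add_of_le' hm
  obtain ⟨p, hp⟩ := exists_sub_mul_sq_mem_of_mem_sq hF
  have hpc : p - a ^ k ∈ Ideal.span {a ^ (k + 1), c} :=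
    sub_pow_mem_span_of_fermatProduct_sub_mul_sq_mem h
      (span_pair_mul_fermatIdeal_le (by lia) hp)
  have hpb : -p - a ^ k ∈ Ideal.span {a ^ (k + 1), b} := by
    refine sub_pow_mem_span_of_fermatProduct_sub_mul_sq_mem h.swap ?_
    rw [Ideal.span_pair_comm, ← fermatIdeal_swap] at hp
    convert neg_mem (span_pair_mul_fermatIdeal_le (by lia) hp) using 1
    rw [fermatProduct_swap]
    ring
  obtain ⟨s, t, hst⟩ := Ideal.mem_span_pair.1 hpc
  obtain ⟨s', t', hst'⟩ := Ideal.mem_span_pair.1 hpb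
  obtain ⟨u, v, huv⟩ := Ideal.mem_span_pair.1 <|
    mem_of_isSMulRegular_quotient_of_mul_mem (r := 2 + (s + s') * a)
      (h.rotate.isSMulRegular_quotient_span_pair.pow k) <|
      Ideal.mem_span_pair.2 ⟨-t', -t, by linear_combination -hst - hst'⟩
  have hspan : Ideal.ofList [a, b, c] = Ideal.span {a, b, c} := by simp [Ideal.span_insert]
  rw [hspan]
  exact Submodule.mem_span_triple.2 ⟨-(s + s'), u, v, by
    simp only [smul_eq_mul]; linear_combination huv⟩

end FermatIdeal

theorem stmt16_general {R : Type*} [CommRing R] {a b c : R}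
    (h : IsPermutablyWeaklyRegular [a, b, c]) (h2 : 2 ∉ Ideal.ofList [a, b, c]) {m : ℕ}
    (hm : 3 ≤ m) : ¬ symbolicPower (fermatIdeal a b c m) 3 ≤ fermatIdeal a b c m ^ 2 :=
  fun hle ↦ h2 <| two_mem_span_of_fermatProduct_mem_sq h (by lia) <|
    hle (fermatProduct_mem_symbolicPower h hm)

/-- For `ψ : x ↦ x², y ↦ y², z ↦ z²`, the (non-radical) ideal
`ψ_*(I) = (x²(y⁶−z⁶), y²(x⁶−z⁶), z²(x⁶−y⁶)) ⊆ ℂ[x,y,z]` satisfies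
`ψ_*(I)^(3) ⊄ ψ_*(I)²`. -/
theorem stmt16 :
    let x : MvPolynomial (Fin 3) ℂ := X 0
    let y : MvPolynomial (Fin 3) ℂ := X 1
    let z : MvPolynomial (Fin 3) ℂ := X 2
    let J : Ideal (MvPolynomial (Fin 3) ℂ) :=
      Ideal.span {x ^ 2 * (y ^ 6 - z ^ 6), y ^ 2 * (x ^ 6 - z ^ 6), z ^ 2 * (x ^ 6 - y ^ 6)}
    ¬ symbolicPower J 3 ≤ J ^ 2 := by
  have hreg := isPermutablyWeaklyRegular_map_X_pow (k := ℂ) (l := [(0 : Fin 3), 1, 2]) (by decide)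
    (fun _ ↦ 2)
  have h2 := notMem_ofList_map_X_pow_of_constantCoeff_ne_zero (f := (2 : MvPolynomial (Fin 3) ℂ))
    (by rw [map_ofNat]; exact two_ne_zero) (l := [0, 1, 2]) (e := fun _ ↦ 2) (by simp)
  simpa only [fermatIdeal, ← pow_mul] using stmt16_general hreg h2 (m := 3) le_rfl
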